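/- arXiv:1402.6957 — 2 statements merged into one kernel-verified Lean document; each statement's English description precedes it below -/
import Mathlib

section
/- Let R be a ring and let {U_i : i ∈ I} and {V_j : j ∈ J} be two families of biuniform right R-modules. If there exist bijections σ, τ : I → J such that U_i and V_{σ(i)} belong to the same monogeny class and U_i and V_{τ(i)} belong to the same epigeny class for every i ∈ I, then the direct products ∏_{i∈I} U_i and ∏_{j∈J} V_j are isomorphic right R-modules. -/
/-- Two modules belong to the same monogeny class if there are injective homomorphisms
in both directions. -/
def SameMonogenyClass (R : Type*) [Ring R] (M N : Type*) [AddCommGroup M] [Module R M]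
    [AddCommGroup N] [Module R N] : Prop :=
  (∃ f : M →ₗ[R] N, Function.Injective f) ∧ ∃ g : N →ₗ[R] M, Function.Injective g

/-- Two modules belong to the same epigeny class if there are surjective homomorphisms
in both directions. -/
def SameEpigenyClass (R : Type*) [Ring R] (M N : Type*) [AddCommGroup M] [Module R M]
    [AddCommGroup N] [Module R N] : Prop :=
  (∃ f : M →ₗ[R] N, Function.Surjective f) ∧ ∃ g : N →ₗ[R] M, Function.Surjective g

/-- A module is uniform if it is nonzero and any two nonzero submodules intersect
nontrivially. -/
def IsUniformModule (R : Type*) [Ring R] (M : Type*) [AddCommGroup M] [Module R M] : Prop :=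
  (∃ x : M, x ≠ 0) ∧ ∀ N P : Submodule R M, N ≠ ⊥ → P ≠ ⊥ → N ⊓ P ≠ ⊥

/-- A module is couniform (hollow) if it is nonzero and the sum of any two proper
submodules is proper. -/
def IsCouniformModule (R : Type*) [Ring R] (M : Type*) [AddCommGroup M] [Module R M] : Prop :=
  (∃ x : M, x ≠ 0) ∧ ∀ N P : Submodule R M, N ≠ ⊤ → P ≠ ⊤ → N ⊔ P ≠ ⊤

/-- A module is biuniform if it is both uniform and couniform. -/
def IsBiuniformModule (R : Type*) [Ring R] (M : Type*) [AddCommGroup M] [Module R M] : Prop :=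
  IsUniformModule R M ∧ IsCouniformModule R M

section Biuniform

variable {R : Type*} [Ring R]

namespace SameMonogenyClass

variable {M N P : Type*} [AddCommGroup M] [Module R M] [AddCommGroup N] [Module R N]
  [AddCommGroup P] [Module R P]

theorem symm (h : SameMonogenyClass R M N) : SameMonogenyClass R N M := ⟨h.2, h.1⟩

theorem trans (h : SameMonogenyClass R M N) (h' : SameMonogenyClass R N P) :
    SameMonogenyClass R M P := by
  obtain ⟨⟨f, hf⟩, g, hg⟩ := h
  obtain ⟨⟨f', hf'⟩, g', hg'⟩ := h'
  exact ⟨⟨f' ∘ₗ f, hf'.comp hf⟩, g ∘ₗ g', hg.comp hg'⟩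

theorem of_linearEquiv (e : M ≃ₗ[R] N) : SameMonogenyClass R M N :=
  ⟨⟨e, e.injective⟩, e.symm, e.symm.injective⟩

end SameMonogenyClass

namespace SameEpigenyClass

variable {M N P : Type*} [AddCommGroup M] [Module R M] [AddCommGroup N] [Module R N]
  [AddCommGroup P] [Module R P]

theorem symm (h : SameEpigenyClass R M N) : SameEpigenyClass R N M := ⟨h.2, h.1⟩

theorem trans (h : SameEpigenyClass R M N) (h' : SameEpigenyClass R N P) :
    SameEpigenyClass R M P := by
  obtain ⟨⟨f, hf⟩, g, hg⟩ := h
  obtain ⟨⟨f', hf'⟩, g', hg'⟩ := h'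
  exact ⟨⟨f' ∘ₗ f, hf'.comp hf⟩, g ∘ₗ g', hg.comp hg'⟩

theorem of_linearEquiv (e : M ≃ₗ[R] N) : SameEpigenyClass R M N :=
  ⟨⟨e, e.surjective⟩, e.symm, e.symm.surjective⟩

end SameEpigenyClass

section Transfer

variable {M N : Type*} [AddCommGroup M] [Module R M] [AddCommGroup N] [Module R N]

theorem IsUniformModule.of_injective (h : IsUniformModule R N) (f : M →ₗ[R] N)
    (hf : Function.Injective f) (hM : ∃ x : M, x ≠ 0) : IsUniformModule R M := by
  refine ⟨hM, fun K L hK hL hKL => ?_⟩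
  refine h.2 (K.map f) (L.map f) ?_ ?_ ?_
  · rwa [Ne, ← Submodule.map_bot f, (Submodule.map_injective_of_injective hf).eq_iff]
  · rwa [Ne, ← Submodule.map_bot f, (Submodule.map_injective_of_injective hf).eq_iff]
  · rw [← Submodule.map_inf f hf, hKL, Submodule.map_bot]

theorem IsCouniformModule.of_surjective (h : IsCouniformModule R M) (f : M →ₗ[R] N)
    (hf : Function.Surjective f) (hN : ∃ x : N, x ≠ 0) : IsCouniformModule R N := by
  have key : ∀ K : Submodule R N, K ≠ ⊤ → K.comap f ≠ ⊤ := fun K hK hK' => hK <| by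
    rw [← Submodule.map_comap_eq_of_surjective hf K, hK', Submodule.map_top,
      LinearMap.range_eq_top.2 hf]
  refine ⟨hN, fun K L hK hL hKL => h.2 _ _ (key K hK) (key L hL) ?_⟩
  rw [eq_top_iff]
  intro x _
  obtain ⟨k, hk, l, hl, hkl⟩ := Submodule.mem_sup.1 (hKL ▸ Submodule.mem_top : f x ∈ K ⊔ L)
  obtain ⟨y, rfl⟩ := hf k
  refine Submodule.mem_sup.2 ⟨y, hk, x - y, ?_, by abel⟩
  rw [Submodule.mem_comap, map_sub, ← hkl, add_sub_cancel_left]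
  exact hl

theorem IsBiuniformModule.of_linearEquiv (h : IsBiuniformModule R M) (e : M ≃ₗ[R] N) :
    IsBiuniformModule R N := by
  have hN : ∃ x : N, x ≠ 0 := by
    obtain ⟨x, hx⟩ := h.1.1
    exact ⟨e x, by simpa using hx⟩
  exact ⟨h.1.of_injective e.symm.toLinearMap e.symm.injective hN,
    h.2.of_surjective e.toLinearMap e.surjective hN⟩

/-- The sum of a non-surjective monomorphism and a non-injective epimorphism of biuniform
modules is an isomorphism. -/
theorem bijective_add_of_injective_of_surjective (hM : IsUniformModule R M)
    (hN : IsCouniformModule R N) (f g : M →ₗ[R] N) (hf : Function.Injective f)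
    (hf' : ¬ Function.Surjective f) (hg : Function.Surjective g)
    (hg' : ¬ Function.Injective g) : Function.Bijective (f + g) := by
  constructor
  · rw [← LinearMap.ker_eq_bot]
    by_contra h
    refine hM.2 _ _ h (mt LinearMap.ker_eq_bot.1 hg') ?_
    rw [eq_bot_iff]
    rintro x ⟨hx, hx'⟩
    have hx₁ : f x + g x = 0 := hx
    have hx₂ : g x = 0 := hx'
    rw [hx₂, add_zero] at hx₁
    exact hf (hx₁.trans (map_zero f).symm)
  · rw [← LinearMap.range_eq_top]
    by_contra h
    refine hN.2 _ _ h (mt LinearMap.range_eq_top.1 hf') ?_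
    rw [eq_top_iff]
    intro y _
    obtain ⟨x, rfl⟩ := hg y
    exact Submodule.mem_sup.2 ⟨(f + g) x, ⟨x, rfl⟩, f (-x), ⟨-x, rfl⟩, by simp⟩

theorem nonempty_linearEquiv_of_injective_of_surjective (hM : IsUniformModule R M)
    (hN : IsCouniformModule R N) (f g : M →ₗ[R] N) (hf : Function.Injective f)
    (hg : Function.Surjective g) : Nonempty (M ≃ₗ[R] N) := by
  by_cases hf' : Function.Surjective f
  · exact ⟨LinearEquiv.ofBijective f ⟨hf, hf'⟩⟩
  by_cases hg' : Function.Injective g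
  · exact ⟨LinearEquiv.ofBijective g ⟨hg', hg⟩⟩
  exact ⟨LinearEquiv.ofBijective _
    (bijective_add_of_injective_of_surjective hM hN f g hf hf' hg hg')⟩

end Transfer

/-- If `A` shares its monogeny class with `B` and its epigeny class with `C`, then `A` is a
direct summand of `B × C`, with a complement in the monogeny class of `C` and the epigeny class
of `B`. -/
theorem exists_biuniform_complement {A B C : Type*} [AddCommGroup A]
    [Module R A] [AddCommGroup B] [Module R B] [AddCommGroup C] [Module R C]
    (hA : IsBiuniformModule R A) (hB : IsBiuniformModule R B) (hC : IsBiuniformModule R C)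
    (hm : SameMonogenyClass R A B) (he : SameEpigenyClass R A C) :
    ∃ D : Submodule R (B × C), IsBiuniformModule R D ∧
      SameMonogenyClass R D C ∧ SameEpigenyClass R D B ∧
      Nonempty ((A × D) ≃ₗ[R] (B × C)) := by
  obtain ⟨⟨f, hf⟩, g, hg⟩ := id hm
  obtain ⟨⟨h, hh⟩, k, hk⟩ := id he
  by_cases hgf : Function.Surjective (g ∘ₗ f)
  · have e : A ≃ₗ[R] B := (LinearEquiv.ofBijective g ⟨hg, Function.Surjective.of_comp hgf⟩).symm
    have eC : C ≃ₗ[R] LinearMap.range (LinearMap.inr R B C) :=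
      LinearEquiv.ofInjective _ LinearMap.inr_injective
    exact ⟨_, hC.of_linearEquiv eC, .of_linearEquiv eC.symm,
      (SameEpigenyClass.of_linearEquiv eC.symm).trans (he.symm.trans (.of_linearEquiv e)),
      ⟨e.prodCongr eC.symm⟩⟩
  by_cases hkh : Function.Injective (k ∘ₗ h)
  · have hh' : Function.Injective h := Function.Injective.of_comp (f := k) hkh
    have e : A ≃ₗ[R] C := LinearEquiv.ofBijective h ⟨hh', hh⟩
    have eB : B ≃ₗ[R] LinearMap.range (LinearMap.inl R B C) :=
      LinearEquiv.ofInjective _ LinearMap.inl_injective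
    exact ⟨_, hB.of_linearEquiv eB,
      (SameMonogenyClass.of_linearEquiv eB.symm).trans (hm.symm.trans (.of_linearEquiv e)),
      .of_linearEquiv eB.symm,
      ⟨(LinearEquiv.prodComm R A _).trans (eB.symm.prodCongr e)⟩⟩
  let ι : A →ₗ[R] B × C := f.prod h
  let q : B × C →ₗ[R] A := g.coprod k
  have hqι : Function.Bijective (q ∘ₗ ι) :=
    bijective_add_of_injective_of_surjective hA.1 hA.2 (g ∘ₗ f) (k ∘ₗ h) (hg.comp hf) hgf
      (hk.comp hh) hkh
  let θ : A ≃ₗ[R] A := LinearEquiv.ofBijective (q ∘ₗ ι) hqι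
  have hθ : ∀ a, q (ι (θ.symm a)) = a := θ.apply_symm_apply
  have hθ' : ∀ a, θ.symm (q (ι a)) = a := θ.symm_apply_apply
  let p : B × C →ₗ[R] LinearMap.ker q :=
    LinearMap.codRestrict _ (LinearMap.id - ι ∘ₗ θ.symm.toLinearMap ∘ₗ q) fun x => by
      simp [hθ]
  have hp : ∀ x, (p x : B × C) = x - ι (θ.symm (q x)) := fun x => rfl
  have hpker : ∀ d : LinearMap.ker q, p d = d := fun d => Subtype.ext <| by
    rw [hp, LinearMap.mem_ker.1 d.2]; simp
  have hpι : ∀ a, p (ι a) = 0 := fun a => Subtype.ext <| by simp [hp, hθ']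
  have inj₁ : Function.Injective (LinearMap.snd R B C ∘ₗ (LinearMap.ker q).subtype) := by
    rw [injective_iff_map_eq_zero]
    rintro ⟨⟨b, c⟩, hd⟩ hc
    replace hc : c = 0 := hc
    replace hd : g b + k c = 0 := hd
    subst hc
    rw [map_zero, add_zero] at hd
    have hb := hg (hd.trans (map_zero g).symm)
    subst hb
    rfl
  have surj₁ : Function.Surjective (LinearMap.fst R B C ∘ₗ (LinearMap.ker q).subtype) := by
    intro b
    obtain ⟨c, hc⟩ := hk (-g b)
    exact ⟨⟨(b, c), by simp [q, hc]⟩, rfl⟩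
  have inj₂ : Function.Injective (p ∘ₗ LinearMap.inr R B C) := by
    rw [injective_iff_map_eq_zero]
    intro c hc
    have h₁ : ((0, c) : B × C) = ι (θ.symm (q (0, c))) :=
      sub_eq_zero.1 ((hp _).symm.trans (congrArg Subtype.val hc))
    generalize θ.symm (q (0, c)) = a at h₁
    have h₂ : 0 = f a := congrArg Prod.fst h₁
    have h₃ : c = h a := congrArg Prod.snd h₁
    rw [h₃, hf (h₂.symm.trans (map_zero f).symm), map_zero]
  have surj₂ : Function.Surjective (p ∘ₗ LinearMap.inl R B C) := by
    intro d
    obtain ⟨a, ha⟩ := hh d.1.2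
    refine ⟨d.1.1 - f a, ?_⟩
    have : LinearMap.inl R B C (d.1.1 - f a) = d.1 - ι a := by
      ext <;> simp [ι, ha]
    rw [LinearMap.comp_apply, this, map_sub, hpι, hpker, sub_zero]
  have hne : ∃ x : LinearMap.ker q, x ≠ 0 := by
    obtain ⟨b, hb⟩ := hB.1.1
    obtain ⟨d, rfl⟩ := surj₁ b
    exact ⟨d, fun hd => hb (by rw [hd, map_zero])⟩
  refine ⟨LinearMap.ker q, ⟨hC.1.of_injective _ inj₁ hne, hB.2.of_surjective _ surj₂ hne⟩,
    ⟨⟨_, inj₁⟩, _, inj₂⟩, ⟨⟨_, surj₁⟩, _, surj₂⟩,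
    ⟨LinearEquiv.ofBijective (ι.coprod (LinearMap.ker q).subtype) ⟨?_, ?_⟩⟩⟩
  · rw [injective_iff_map_eq_zero]
    rintro ⟨a, d⟩ had
    replace had : ι a + d = 0 := had
    have ha : a = 0 := by
      have h₁ := congrArg q had
      rw [map_add, LinearMap.mem_ker.1 d.2, add_zero, map_zero] at h₁
      rw [← hθ' a, h₁, map_zero]
    rw [ha, map_zero, zero_add] at had
    exact Prod.ext ha (Subtype.ext had)
  · exact fun x => ⟨(θ.symm (q x), p x), by simp [hp]⟩

theorem nonempty_prod_linearEquiv_of_swap {A B C D : Type*} [AddCommGroup A] [Module R A]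
    [AddCommGroup B] [Module R B] [AddCommGroup C] [Module R C] [AddCommGroup D] [Module R D]
    (hA : IsBiuniformModule R A) (hB : IsBiuniformModule R B) (hC : IsBiuniformModule R C)
    (hD : IsBiuniformModule R D) (hAB : SameMonogenyClass R A B) (hDC : SameMonogenyClass R D C)
    (hAC : SameEpigenyClass R A C) (hDB : SameEpigenyClass R D B) :
    Nonempty ((A × D) ≃ₗ[R] (B × C)) := by
  obtain ⟨D', hD', hm, he, ⟨e⟩⟩ := exists_biuniform_complement hA hB hC hAB hAC
  obtain ⟨f, hf⟩ := (hDC.trans hm.symm).1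
  obtain ⟨g, hg⟩ := (hDB.trans he.symm).1
  obtain ⟨e'⟩ := nonempty_linearEquiv_of_injective_of_surjective hD.1 hD'.2 f g hf hg
  exact ⟨((LinearEquiv.refl R A).prodCongr e').trans e⟩

section Pi

variable {ι : Type*} (X : ι → Type*) [∀ i, AddCommGroup (X i)] [∀ i, Module R (X i)]

variable (R) in
/-- A product over a two-element index type is a binary product. -/
theorem nonempty_pi_linearEquiv_prod {i j : ι} (hij : i ≠ j) (h : ∀ k, k = i ∨ k = j) :
    Nonempty ((∀ k, X k) ≃ₗ[R] (X i × X j)) := by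
  classical
  refine ⟨LinearEquiv.ofBijective
    ((LinearMap.proj i : (∀ k, X k) →ₗ[R] X i).prod (LinearMap.proj j)) ⟨?_, ?_⟩⟩
  · intro x y hxy
    funext k
    obtain rfl | rfl := h k
    · exact congrArg Prod.fst hxy
    · exact congrArg Prod.snd hxy
  · rintro ⟨a, b⟩
    refine ⟨Function.update (Function.update 0 i a) j b, ?_⟩
    ext <;> simp [hij]

variable (R) in
/-- A product is the product, over the base of a map, of the products over its fibres. -/
def LinearEquiv.piFiber {Q : Type*} (p : ι → Q) :
    (∀ i, X i) ≃ₗ[R] ∀ q : Q, ∀ i : {i // p i = q}, X i where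
  toFun x _ i := x i
  invFun y i := y (p i) ⟨i, rfl⟩
  map_add' _ _ := rfl
  map_smul' _ _ := rfl
  left_inv _ := rfl
  right_inv y := by
    funext q ⟨i, hi⟩
    subst hi
    rfl

/-- Isomorphism of direct products when the epigeny classes are matched by an involution. -/
theorem nonempty_pi_linearEquiv_of_involutive {X : ι → Type*} [∀ i, AddCommGroup (X i)]
    [∀ i, Module R (X i)] {Y : ι → Type*} [∀ i, AddCommGroup (Y i)] [∀ i, Module R (Y i)]
    (hX : ∀ i, IsBiuniformModule R (X i)) (hY : ∀ i, IsBiuniformModule R (Y i))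
    (c : ι → ι) (hc : Function.Involutive c)
    (hm : ∀ i, SameMonogenyClass R (X i) (Y i))
    (he : ∀ i, SameEpigenyClass R (X i) (Y (c i))) :
    Nonempty ((∀ i, X i) ≃ₗ[R] ∀ i, Y i) := by
  let p : ι → Set ι := fun i => {i, c i}
  suffices H : ∀ q : Set ι, Nonempty ((∀ i : {i // p i = q}, X i) ≃ₗ[R]
      ∀ i : {i // p i = q}, Y i) by
    exact ⟨(LinearEquiv.piFiber R X p).trans
      ((LinearEquiv.piCongrRight fun q => Classical.choice (H q)).trans
        (LinearEquiv.piFiber R Y p).symm)⟩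
  intro q
  obtain hq | ⟨⟨i, rfl⟩⟩ := isEmpty_or_nonempty {i // p i = q}
  · exact ⟨0⟩
  have hpc : p (c i) = p i := by simp only [p, hc i, Set.pair_comm]
  have hmem : ∀ k, p k = p i → k = i ∨ k = c i := fun k hk => by
    have : k ∈ p i := hk ▸ Set.mem_insert _ _
    simpa [p] using this
  by_cases hi : c i = i
  · refine ⟨LinearEquiv.piCongrRight fun k => Classical.choice ?_⟩
    obtain ⟨k, hk⟩ := k
    have hk' : c k = k := by
      obtain rfl | rfl := hmem k hk
      · exact hi
      · rw [hi, hi]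
    obtain ⟨f, hf⟩ := (hm k).1
    have he' := he k
    rw [hk'] at he'
    obtain ⟨g, hg⟩ := he'.1
    exact nonempty_linearEquiv_of_injective_of_surjective (hX k).1 (hY k).2 f g hf hg
  · have hne : (⟨i, rfl⟩ : {k // p k = p i}) ≠ ⟨c i, hpc⟩ := fun h =>
      hi (congrArg Subtype.val h).symm
    have hall : ∀ k : {k // p k = p i}, k = ⟨i, rfl⟩ ∨ k = ⟨c i, hpc⟩ := fun k =>
      (hmem k k.2).imp Subtype.ext Subtype.ext
    obtain ⟨eX⟩ := nonempty_pi_linearEquiv_prod R (fun k : {k // p k = p i} => X k) hne hall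
    obtain ⟨eY⟩ := nonempty_pi_linearEquiv_prod R (fun k : {k // p k = p i} => Y k) hne hall
    have he' : SameEpigenyClass R (X (c i)) (Y i) := by
      have := he (c i)
      rwa [hc i] at this
    obtain ⟨e⟩ := nonempty_prod_linearEquiv_of_swap (hX i) (hY i) (hY (c i)) (hX (c i))
      (hm i) (hm (c i)) (he i) he'
    exact ⟨eX.trans (e.trans eY.symm)⟩

end Pi

end Biuniform

/-- Every permutation is inverted by an involution preserving each of its cycles. -/
theorem Equiv.Perm.exists_involutive_inverting {α : Type*} (π : Equiv.Perm α) :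
    ∃ a : α → α, Function.Involutive a ∧ (∀ i, π (a (π i)) = a i) ∧
      ∀ i, π.SameCycle i (a i) := by
  let r : α → α := fun i => (Quotient.mk (Equiv.Perm.SameCycle.setoid π) i).out
  have hr : ∀ i, π.SameCycle (r i) i := fun i =>
    Quotient.mk_out (s := Equiv.Perm.SameCycle.setoid π) i
  have hr' : ∀ {i j}, π.SameCycle i j → r i = r j := fun {i j} h =>
    congrArg Quotient.out (Quotient.sound (s := Equiv.Perm.SameCycle.setoid π) h)
  choose n hn using hr
  have hcyc : ∀ i (k : ℤ), r ((π ^ k) (r i)) = r i := fun i k =>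
    hr' (Equiv.Perm.SameCycle.trans ⟨-k, by simp⟩ ⟨n i, hn i⟩)
  let a : α → α := fun i => (π ^ (-n i)) (r i)
  have ha : ∀ i (k : ℤ), a ((π ^ k) (r i)) = (π ^ (-k)) (r i) := fun i k => by
    have h := hn ((π ^ k) (r i))
    rw [hcyc] at h
    change (π ^ (-n ((π ^ k) (r i)))) (r ((π ^ k) (r i))) = _
    rw [hcyc]
    generalize n ((π ^ k) (r i)) = m at h
    have h' := congrArg (π ^ (-m - k)) h
    rw [← Equiv.Perm.mul_apply, ← Equiv.Perm.mul_apply, ← zpow_add, ← zpow_add] at h'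
    rw [show -m - k + m = -k by ring, show -m - k + k = -m by ring] at h'
    exact h'.symm
  refine ⟨a, fun i => ?_, fun i => ?_, fun i => ?_⟩
  · change a ((π ^ (-n i)) (r i)) = i
    rw [ha, neg_neg, hn]
  · have h : π i = (π ^ (1 + n i)) (r i) := by
      rw [zpow_add, zpow_one, Equiv.Perm.mul_apply, hn]
    rw [h, ha, ← Equiv.Perm.mul_apply, ← zpow_one_add, show 1 + -(1 + n i) = -n i by ring]
  · exact Equiv.Perm.SameCycle.trans (Equiv.Perm.SameCycle.symm ⟨n i, hn i⟩) ⟨-n i, rfl⟩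

universe u v w

section Permutation

variable {R : Type v} [Ring R] {I : Type u} {U V : I → Type w}
  [∀ i, AddCommGroup (U i)] [∀ i, Module R (U i)]
  [∀ i, AddCommGroup (V i)] [∀ i, Module R (V i)]

theorem exists_biuniform_of_sameCycle
    (hU : ∀ i, IsBiuniformModule R (U i)) (hV : ∀ i, IsBiuniformModule R (V i))
    (π : Equiv.Perm I) (hm : ∀ i, SameMonogenyClass R (U i) (V i))
    (he : ∀ i, SameEpigenyClass R (U i) (V (π i))) {i j : I} (hij : π.SameCycle i j) :
    ∃ (W : Type w) (_ : AddCommGroup W) (_ : Module R W), IsBiuniformModule R W ∧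
      SameMonogenyClass R W (V i) ∧ SameEpigenyClass R W (V j) := by
  have step : ∀ {A B : Type w} [AddCommGroup A] [Module R A] [AddCommGroup B] [Module R B]
      {E E' : Type w} [AddCommGroup E] [Module R E] [AddCommGroup E'] [Module R E'],
      IsBiuniformModule R A → IsBiuniformModule R B → SameMonogenyClass R A B →
      SameEpigenyClass R A E → SameEpigenyClass R B E' →
      (∃ (W : Type w) (_ : AddCommGroup W) (_ : Module R W), IsBiuniformModule R W ∧
        SameMonogenyClass R W (V i) ∧ SameEpigenyClass R W E) →
      ∃ (W : Type w) (_ : AddCommGroup W) (_ : Module R W), IsBiuniformModule R W ∧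
        SameMonogenyClass R W (V i) ∧ SameEpigenyClass R W E' := by
    rintro A B _ _ _ _ E E' _ _ _ _ hA hB hAB hAE hBE' ⟨C, _, _, hC, hCm, hCe⟩
    obtain ⟨D, hD, hDm, hDe, -⟩ :=
      exists_biuniform_complement hA hB hC hAB (hAE.trans hCe.symm)
    exact ⟨D, inferInstance, inferInstance, hD, hDm.trans hCm, hDe.trans hBE'⟩
  obtain ⟨n, rfl⟩ := hij
  induction n using Int.induction_on with
  | zero =>
    exact ⟨V i, inferInstance, inferInstance, hV i, .of_linearEquiv (.refl R _),
      .of_linearEquiv (.refl R _)⟩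
  | succ n ih =>
    rw [add_comm, zpow_add, zpow_one, Equiv.Perm.mul_apply]
    exact step (hV _) (hU _) (hm _).symm (.of_linearEquiv (.refl R _)) (he _) ih
  | pred n ih =>
    have h : (π ^ (-n : ℤ)) i = π ((π ^ (-n - 1 : ℤ)) i) := by
      rw [← Equiv.Perm.mul_apply, ← zpow_one_add, add_sub_cancel]
    rw [h] at ih
    exact step (hU _) (hV _) (hm _) (he _) (.of_linearEquiv (.refl R _)) ih

theorem nonempty_pi_linearEquiv_of_perm
    (hU : ∀ i, IsBiuniformModule R (U i)) (hV : ∀ i, IsBiuniformModule R (V i))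
    (π : Equiv.Perm I) (hm : ∀ i, SameMonogenyClass R (U i) (V i))
    (he : ∀ i, SameEpigenyClass R (U i) (V (π i))) :
    Nonempty ((∀ i, U i) ≃ₗ[R] ∀ i, V i) := by
  obtain ⟨a, ha, haπ, hcyc⟩ := π.exists_involutive_inverting
  choose W _ _ hW hWm hWe using
    fun i => exists_biuniform_of_sameCycle hU hV π hm he (hcyc i)
  obtain ⟨e₁⟩ := nonempty_pi_linearEquiv_of_involutive hU hW (fun i => a (π i))
    (fun i => by simp only [haπ, ha i]) (fun i => (hm i).trans (hWm i).symm) (fun i => by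
      have h := hWe (a (π i))
      rw [ha (π i)] at h
      exact (he i).trans h.symm)
  obtain ⟨e₂⟩ := nonempty_pi_linearEquiv_of_involutive hW hV a ha hWm hWe
  exact ⟨e₁.trans e₂⟩

end Permutation

/-- Isomorphism of direct products over a common index set, for modules in arbitrary universes. -/
theorem nonempty_pi_linearEquiv_of_ulift {R : Type*} [Ring R] {I : Type*}
    (U : I → Type u) (V : I → Type v)
    [∀ i, AddCommGroup (U i)] [∀ i, Module R (U i)]
    [∀ i, AddCommGroup (V i)] [∀ i, Module R (V i)]
    (hU : ∀ i, IsBiuniformModule R (U i)) (hV : ∀ i, IsBiuniformModule R (V i))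
    (π : Equiv.Perm I) (hm : ∀ i, SameMonogenyClass R (U i) (V i))
    (he : ∀ i, SameEpigenyClass R (U i) (V (π i))) :
    Nonempty ((∀ i, U i) ≃ₗ[R] ∀ i, V i) := by
  have eU : ∀ i, U i ≃ₗ[R] ULift.{v} (U i) := fun i => ULift.moduleEquiv.symm
  have eV : ∀ i, V i ≃ₗ[R] ULift.{u} (V i) := fun i => ULift.moduleEquiv.symm
  obtain ⟨e⟩ := nonempty_pi_linearEquiv_of_perm
    (fun i => (hU i).of_linearEquiv (eU i)) (fun i => (hV i).of_linearEquiv (eV i)) π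
    (fun i => (SameMonogenyClass.of_linearEquiv (eU i).symm).trans
      ((hm i).trans (.of_linearEquiv (eV i))))
    (fun i => (SameEpigenyClass.of_linearEquiv (eU i).symm).trans
      ((he i).trans (.of_linearEquiv (eV (π i)))))
  exact ⟨(LinearEquiv.piCongrRight eU).trans
    (e.trans (LinearEquiv.piCongrRight eV).symm)⟩

/-- If two families of biuniform modules have their monogeny classes and epigeny classes
matched by bijections, then their direct products are isomorphic. -/
theorem direct_products_of_biuniform_isomorphic
    {R : Type*} [Ring R] {I J : Type*}
    (U : I → Type*) (V : J → Type*)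
    [∀ i, AddCommGroup (U i)] [∀ i, Module R (U i)]
    [∀ j, AddCommGroup (V j)] [∀ j, Module R (V j)]
    (hU : ∀ i, IsBiuniformModule R (U i)) (hV : ∀ j, IsBiuniformModule R (V j))
    (σ τ : I ≃ J)
    (hm : ∀ i, SameMonogenyClass R (U i) (V (σ i)))
    (he : ∀ i, SameEpigenyClass R (U i) (V (τ i))) :
    Nonempty (((i : I) → U i) ≃ₗ[R] ((j : J) → V j)) := by
  obtain ⟨e⟩ := nonempty_pi_linearEquiv_of_ulift U (fun i => V (σ i)) hU (fun i => hV (σ i))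
    (τ.trans σ.symm) hm fun i => by
      change SameEpigenyClass R (U i) (V (σ (σ.symm (τ i))))
      rw [σ.apply_symm_apply]
      exact he i
  exact ⟨e.trans (LinearEquiv.piCongrLeft R V σ)⟩
end

section
/- Let R be a ring. For each i ∈ I let f_i : E_i → E'_i and for each j ∈ J let g_j : F_j → F'_j be non-injective R-module homomorphisms between indecomposable injective right R-modules, and set A_i = ker f_i, B_j = ker g_j. Suppose there exist bijections σ, τ : I → J such that: (1) A_i and B_{σ(i)} belong to the same monogeny class for every i ∈ I; and (2) A_i and B_{τ(i)} have the same upper part for every i ∈ I, i.e., there exist homomorphisms φ : E_i → F_{τ(i)} and ψ : F_{τ(i)} → E_i with φ^{-1}(B_{τ(i)}) = A_i and ψ^{-1}(A_i) = B_{τ(i)}. Then ∏_{i∈I} A_i ≅ ∏_{j∈J} B_j as right R-modules. -/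
/-- A module is indecomposable if it is nonzero and is not the internal direct sum of two
nonzero submodules. -/
def IsIndecomposableModule (R : Type*) [Ring R] (M : Type*) [AddCommGroup M] [Module R M] :
    Prop :=
  (∃ x : M, x ≠ 0) ∧
    ∀ N P : Submodule R M, N ⊓ P = ⊥ → N ⊔ P = ⊤ → N = ⊥ ∨ P = ⊥

namespace WeakKrullSchmidt

open CategoryTheory

/-- `Equiv.piEquivPiSubtypeProd` as a linear equivalence. -/
def piEquivPiSubtypeProd (R : Type*) [Ring R] {I : Type*} (p : I → Prop) [DecidablePred p]
    (X : I → Type*) [∀ i, AddCommGroup (X i)] [∀ i, Module R (X i)] :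
    (∀ i, X i) ≃ₗ[R] (∀ i : {i // p i}, X i) × ∀ i : {i // ¬p i}, X i where
  __ := Equiv.piEquivPiSubtypeProd p X
  map_add' _ _ := rfl
  map_smul' _ _ := rfl

/-- Direct products are isomorphic if they are so over a subset of the indices and over its
complement. -/
theorem nonempty_equiv_of_subtype {R I : Type*} [Ring R] {X Y : I → Type*}
    [∀ i, AddCommGroup (X i)] [∀ i, Module R (X i)] [∀ i, AddCommGroup (Y i)]
    [∀ i, Module R (Y i)] (p : I → Prop)
    (h₁ : Nonempty ((∀ i : {i // p i}, X i) ≃ₗ[R] ∀ i : {i // p i}, Y i))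
    (h₂ : Nonempty ((∀ i : {i // ¬p i}, X i) ≃ₗ[R] ∀ i : {i // ¬p i}, Y i)) :
    Nonempty ((∀ i, X i) ≃ₗ[R] ∀ i, Y i) := by
  classical
  obtain ⟨e₁⟩ := h₁
  obtain ⟨e₂⟩ := h₂
  exact ⟨(piEquivPiSubtypeProd R p X).trans
    ((e₁.prodCongr e₂).trans (piEquivPiSubtypeProd R p Y).symm)⟩

open Equiv.Perm in
/-- Every permutation is reversed by an involution preserving its cycles. -/
theorem exists_involutive_reversing {I : Type*} (π : Equiv.Perm I) :
    ∃ ρ : I → I, Function.Involutive ρ ∧ (∀ i, ρ (π i) = π⁻¹ (ρ i)) ∧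
      ∀ i, π.SameCycle i (ρ i) := by
  let r : I → I := fun i => (Quotient.mk (SameCycle.setoid π) i).out
  have hr (i : I) : π.SameCycle (r i) i :=
    Quotient.exact (s := SameCycle.setoid π) (Quotient.out_eq _)
  have hr' {i j : I} (hij : π.SameCycle i j) : r i = r j :=
    congrArg Quotient.out (Quotient.sound hij)
  choose n hn using hr
  let ρ : I → I := fun i => (π ^ (-n i)) (r i)
  have hρ {i : I} (k : ℤ) (hk : (π ^ k) (r i) = i) : ρ i = (π ^ (-k)) (r i) := by
    have h := congrArg (π ^ (-n i - k)) ((hn i).trans hk.symm)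
    rw [← mul_apply, ← mul_apply, ← zpow_add, ← zpow_add] at h
    rw [show -n i - k + n i = -k by ring, show -n i - k + k = -n i by ring] at h
    exact h.symm
  have hc (i : I) : π.SameCycle i (ρ i) := by
    refine SameCycle.trans (y := r i) (SameCycle.symm ⟨n i, hn i⟩) ⟨-n i, rfl⟩
  refine ⟨ρ, fun i => ?_, fun i => ?_, hc⟩
  · rw [hρ (i := ρ i) (-n i) (by rw [← hr' (hc i)]), ← hr' (hc i), neg_neg, hn]
  · have h : r i = r (π i) := hr' ⟨1, by simp⟩
    rw [hρ (i := π i) (1 + n i) (by rw [← h, zpow_add, zpow_one, mul_apply, hn]), ← h,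
      neg_add, zpow_add, zpow_neg_one, mul_apply]

section Abstract

universe w

/-- `X` and `Y` belong to the same `W`-class: there are morphisms in `W` in both directions. -/
def SameClass {C : Type*} [Category C] (W : MorphismProperty C) (X Y : C) : Prop :=
  (∃ f : X ⟶ Y, W f) ∧ ∃ g : Y ⟶ X, W g

theorem SameClass.symm {C : Type*} [Category C] {W : MorphismProperty C} {X Y : C}
    (h : SameClass W X Y) : SameClass W Y X := ⟨h.2, h.1⟩

variable {C : Type*} [Category C]

section

variable {R : Type*} [Ring R] {I : Type*} {ρ : I → I}

/-- The map `x ↦ (a i (x i) + b i (x (ρ i)))ᵢ` between direct products. -/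
noncomputable def twist (G : C ⥤ ModuleCat.{w} R) {X Y : I → C} (a : ∀ i, X i ⟶ Y i)
    (b : ∀ i j, ρ i = j → (X j ⟶ Y i)) :
    (∀ i, G.obj (X i)) →ₗ[R] ∀ i, G.obj (Y i) :=
  LinearMap.pi fun i => (G.map (a i)).hom ∘ₗ LinearMap.proj i +
    (G.map (b i (ρ i) rfl)).hom ∘ₗ LinearMap.proj (ρ i)

theorem twist_apply {G : C ⥤ ModuleCat.{w} R} {X Y : I → C} (a : ∀ i, X i ⟶ Y i)
    (b : ∀ i j, ρ i = j → (X j ⟶ Y i)) (x : ∀ i, G.obj (X i)) {i j : I} (h : ρ i = j) :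
    twist G a b x i = (G.map (a i)).hom (x i) + (G.map (b i j h)).hom (x j) := by
  subst h
  rfl

end

variable [Preadditive C]

/-- The complement of `W` is a completely prime ideal of the preadditive category `C`. -/
structure HasPrimeComplement (W : MorphismProperty C) : Prop where
  id_mem (X : C) : W (𝟙 X)
  comp_mem {X Y Z : C} {f : X ⟶ Y} {g : Y ⟶ Z} : W f → W g → W (f ≫ g)
  of_comp {X Y Z : C} {f : X ⟶ Y} {g : Y ⟶ Z} : W (f ≫ g) → W f
  of_comp_right {X Y Z : C} {f : X ⟶ Y} {g : Y ⟶ Z} : W (f ≫ g) → W g ∨ W (0 : X ⟶ X)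
  of_add {X Y : C} {f g : X ⟶ Y} : W (f + g) → W f ∨ W g

namespace HasPrimeComplement

variable {W : MorphismProperty C}

theorem neg {X Y : C} {f : X ⟶ Y} (hW : HasPrimeComplement W) (hf : W f) : W (-f) := by
  have h : W (-𝟙 Y) := hW.of_comp (g := -𝟙 Y) (by simpa using hW.id_mem Y)
  simpa using hW.comp_mem hf h

theorem add {X Y : C} {f g : X ⟶ Y} (hW : HasPrimeComplement W) (hf : W f) (hg : ¬W g) :
    W (f + g) := by
  have h : W ((f + g) + -g) := by simpa using hf
  refine (hW.of_add h).resolve_right fun h' => hg ?_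
  simpa using hW.neg h'

theorem sub {X Y : C} {f g : X ⟶ Y} (hW : HasPrimeComplement W) (hf : W f) (hg : ¬W g) :
    W (f - g) := by
  rw [sub_eq_add_neg]
  exact hW.add hf fun h => hg (by simpa using hW.neg h)

end HasPrimeComplement

theorem HasPrimeComplement.sameClass_refl {W : MorphismProperty C} (hW : HasPrimeComplement W)
    (X : C) : SameClass W X X := ⟨⟨_, hW.id_mem X⟩, ⟨_, hW.id_mem X⟩⟩

theorem HasPrimeComplement.sameClass_trans {W : MorphismProperty C} (hW : HasPrimeComplement W)
    {X Y Z : C} (h : SameClass W X Y) (h' : SameClass W Y Z) : SameClass W X Z := by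
  obtain ⟨⟨f, hf⟩, ⟨g, hg⟩⟩ := h
  obtain ⟨⟨f', hf'⟩, ⟨g', hg'⟩⟩ := h'
  exact ⟨⟨_, hW.comp_mem hf hf'⟩, ⟨_, hW.comp_mem hg' hg⟩⟩

/-- Some endomorphism of `X` lies in `M` but not in `U`. -/
def Separates (M U : MorphismProperty C) (X : C) : Prop :=
  ∃ k : X ⟶ X, M k ∧ ¬U k

/-- The complements of `M` and `U` are completely prime ideals which jointly detect
isomorphisms. -/
structure IsPrimePair (M U : MorphismProperty C) : Prop where
  left : HasPrimeComplement M
  right : HasPrimeComplement U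
  isIso {X Y : C} {f : X ⟶ Y} : M f → U f → IsIso f

namespace IsPrimePair

variable {M U : MorphismProperty C}

theorem swap (h : IsPrimePair M U) : IsPrimePair U M where
  left := h.right
  right := h.left
  isIso hU hM := h.isIso hM hU

theorem nonempty_iso_of_not_separates (h : IsPrimePair M U) {X Y : C} (hX : ¬Separates U M X)
    (hXY : SameClass U X Y) : Nonempty (X ≅ Y) := by
  obtain ⟨⟨f, hf⟩, ⟨g, hg⟩⟩ := hXY
  have hM : M (f ≫ g) := by
    by_contra hM
    exact hX ⟨_, h.right.comp_mem hf hg, hM⟩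
  have := h.isIso (h.left.of_comp hM) hf
  exact ⟨asIso f⟩

theorem separates_of_iso (h : IsPrimePair M U) {X Y : C} (e : X ≅ Y) (hY : Separates U M Y) :
    Separates U M X := by
  obtain ⟨k, hk, hk'⟩ := hY
  have hU : U e.hom := h.right.of_comp (g := e.inv) (by simpa using h.right.id_mem X)
  have hU' : U e.inv := h.right.of_comp (g := e.hom) (by simpa using h.right.id_mem Y)
  have hM : M e.hom := h.left.of_comp (g := e.inv) (by simpa using h.left.id_mem X)
  have hM' : M e.inv := h.left.of_comp (g := e.hom) (by simpa using h.left.id_mem Y)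
  refine ⟨e.hom ≫ k ≫ e.inv, h.right.comp_mem hU (h.right.comp_mem hk hU'), fun hc => hk' ?_⟩
  have := h.left.comp_mem hM' (h.left.comp_mem hc hM)
  simpa using this

theorem separates_of_sameClass (h : IsPrimePair M U) {X Y : C} (hXY : SameClass M X Y)
    (hY : Separates U M Y) : Separates U M X := by
  by_contra hX
  obtain ⟨⟨f, hf⟩, ⟨g, hg⟩⟩ := hXY
  obtain ⟨k, hk, hk'⟩ := hY
  by_cases hgf : U (g ≫ f)
  · have := h.isIso hg (h.right.of_comp hgf)
    exact hX (h.separates_of_iso (asIso g).symm ⟨k, hk, hk'⟩)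
  have hM : M (k + g ≫ f) := by
    rw [add_comm]
    exact h.left.add (h.left.comp_mem hg hf) hk'
  have := h.isIso hM (h.right.add hk hgf)
  set c := inv (k + g ≫ f) with hc
  have hsum : k ≫ c + g ≫ f ≫ c = 𝟙 Y := by
    rw [← Category.assoc g, ← Preadditive.add_comp, hc, IsIso.hom_inv_id]
  have hnot : ¬M (𝟙 X - f ≫ c ≫ g) := fun h1 => hk' <| by
    have h2 := h.left.comp_mem hg h1
    have h3 : g ≫ (𝟙 X - f ≫ c ≫ g) = k ≫ c ≫ g := by
      have h4 := congrArg (· ≫ g) hsum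
      simp only [Preadditive.add_comp, Category.assoc, Category.id_comp] at h4
      simpa using sub_eq_of_eq_add h4.symm
    rw [h3] at h2
    exact h.left.of_comp h2
  have hnot' : ¬U (𝟙 X - f ≫ c ≫ g) := fun h1 => hX ⟨_, h1, hnot⟩
  have hU : U (f ≫ c ≫ g) := by simpa using h.right.sub (h.right.id_mem X) hnot'
  have := h.isIso hf (h.right.of_comp hU)
  exact hX (h.separates_of_iso (asIso f) ⟨k, hk, hk'⟩)

/-- Both ideals are needed to detect the isomorphisms between objects in the class of `X`. -/
def Generic (M U : MorphismProperty C) (X : C) : Prop :=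
  Separates M U X ∧ Separates U M X

theorem generic_of_sameClass (h : IsPrimePair M U) {X Y W : C} (hX : Generic M U X)
    (hY : Generic M U Y) (hWX : SameClass M W X) (hWY : SameClass U W Y) : Generic M U W :=
  ⟨h.swap.separates_of_sameClass hWY hY.1, h.separates_of_sameClass hWX hX.2⟩

theorem exists_hom (h : IsPrimePair M U) {X Y : C} (hX : Separates M U X)
    (hXY : SameClass M X Y) : ∃ f : X ⟶ Y, M f ∧ ¬U f := by
  obtain ⟨⟨f, hf⟩, -⟩ := hXY
  obtain ⟨k, hk, hk'⟩ := hX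
  exact ⟨k ≫ f, h.left.comp_mem hk hf, fun hc => hk' (h.right.of_comp hc)⟩

theorem of_comp_right (h : IsPrimePair M U) {X Y Z : C} (hX : Separates M U X) {f : X ⟶ Y}
    {g : Y ⟶ Z} (hfg : U (f ≫ g)) : U g := by
  obtain ⟨k, hk, hk'⟩ := hX
  refine (h.right.of_comp_right hfg).resolve_right fun h0 => hk' ?_
  exact h.right.of_comp (g := 0) (by simpa using h0)

/-- Weak pullbacks of morphisms of `M` along morphisms of `U` exist, with projections in `M`
and `U`. -/
def HasWeakPullbacks (M U : MorphismProperty C) : Prop :=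
  ∀ ⦃X Y Z : C⦄ (b : X ⟶ Z) (a : Y ⟶ Z), U b → M a →
    ∃ (W : C) (p : W ⟶ X) (q : W ⟶ Y), M p ∧ U q ∧
      ∀ ⦃T : C⦄ (s : T ⟶ X) (t : T ⟶ Y), s ≫ b = t ≫ a → ∃ l : T ⟶ W, l ≫ p = s ∧ l ≫ q = t

theorem exists_exchange (h : IsPrimePair M U) (hP : HasWeakPullbacks M U) {X Y Z : C}
    (hX : Generic M U X) (hY : Generic M U Y) (hYZ : SameClass M Y Z) (hXZ : SameClass U X Z) :
    ∃ W, SameClass M W X ∧ SameClass U W Y := by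
  have hZ : Generic M U Z := h.generic_of_sameClass hY hX hYZ.symm hXZ.symm
  obtain ⟨a, ha, ha'⟩ := h.exists_hom hY.1 hYZ
  obtain ⟨a₁, ha₁, ha₁'⟩ := h.exists_hom hZ.1 hYZ.symm
  obtain ⟨b, hb, hb'⟩ := h.swap.exists_hom hX.2 hXZ
  obtain ⟨b₁, hb₁, hb₁'⟩ := h.swap.exists_hom hZ.2 hXZ.symm
  have hM : M (b₁ ≫ b + a₁ ≫ a) := by
    rw [add_comm]
    exact h.left.add (h.left.comp_mem ha₁ ha) fun hc => hb₁' (h.left.of_comp hc)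
  have hU : U (b₁ ≫ b + a₁ ≫ a) :=
    h.right.add (h.right.comp_mem hb₁ hb) fun hc => ha₁' (h.right.of_comp hc)
  have := h.isIso hM hU
  set c := inv (b₁ ≫ b + a₁ ≫ a) with hc
  have hsum : c ≫ b₁ ≫ b = 𝟙 Z - c ≫ a₁ ≫ a := by
    rw [eq_sub_iff_add_eq, ← Preadditive.comp_add, hc, IsIso.inv_hom_id]
  obtain ⟨W, p, q, hp, hq, hW⟩ := hP b a hb ha
  obtain ⟨l, hl, -⟩ := hW (𝟙 X - b ≫ c ≫ b₁) (b ≫ c ≫ a₁) (by simp [hsum])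
  obtain ⟨m, -, hm⟩ := hW (a ≫ c ≫ b₁) (𝟙 Y - a ≫ c ≫ a₁) (by simp [hsum])
  refine ⟨W, ⟨⟨p, hp⟩, l, h.left.of_comp (g := p) ?_⟩, ⟨q, hq⟩, m, h.right.of_comp (g := q) ?_⟩
  · rw [hl]
    exact h.left.sub (h.left.id_mem X) fun h' => hb' (h.left.of_comp h')
  · rw [hm]
    exact h.right.sub (h.right.id_mem Y) fun h' => ha' (h.right.of_comp h')

end IsPrimePair

section Twist

variable {R : Type*} [Ring R] {G : C ⥤ ModuleCat.{w} R} {I : Type*} {ρ : I → I}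

variable [G.Additive]

theorem twist_comp (hρ : Function.Involutive ρ) {X Y Z : I → C} (a : ∀ i, X i ⟶ Y i)
    (b : ∀ i j, ρ i = j → (X j ⟶ Y i)) (a' : ∀ i, Y i ⟶ Z i)
    (b' : ∀ i j, ρ i = j → (Y j ⟶ Z i)) :
    twist G a' b' ∘ₗ twist G a b =
      twist G (fun i => a i ≫ a' i + b (ρ i) i (hρ i) ≫ b' i (ρ i) rfl)
        (fun i j h => b i j h ≫ a' i + a j ≫ b' i j h) := by
  ext x i
  rw [LinearMap.comp_apply, twist_apply a' b' _ rfl, twist_apply a b _ rfl,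
    twist_apply a b _ (hρ i), twist_apply _ _ _ rfl]
  simp only [Functor.map_add, Functor.map_comp, ModuleCat.hom_add, ModuleCat.hom_comp,
    LinearMap.add_apply, LinearMap.comp_apply, map_add]
  abel

theorem twist_zero_bijective (hρ : Function.Involutive ρ) {X : I → C} {a : ∀ i, X i ⟶ X i}
    {b : ∀ i j, ρ i = j → (X j ⟶ X i)} (ha : ∀ i, IsIso (a i)) (hb : ∀ i j h, b i j h = 0) :
    Function.Bijective (twist G a b) := by
  obtain rfl : b = fun _ _ _ => 0 := by
    ext i j h
    exact hb i j h
  have key (x : ∀ i, G.obj (X i)) :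
      twist (ρ := ρ) G (fun i => 𝟙 (X i)) (fun _ _ _ => 0) x = x := by
    ext i
    simp [twist_apply _ _ _ rfl]
  refine Function.bijective_iff_has_inverse.2
    ⟨twist (ρ := ρ) G (fun i => inv (a i)) (fun _ _ _ => 0), fun x => ?_, fun x => ?_⟩ <;>
  · rw [← LinearMap.comp_apply, twist_comp hρ]
    simpa using key x

namespace IsPrimePair

variable {M U : MorphismProperty C}

theorem twist_bijective (h : IsPrimePair M U) (hρ : Function.Involutive ρ) {X : I → C}
    {a : ∀ i, X i ⟶ X i} {b : ∀ i j, ρ i = j → (X j ⟶ X i)} (haM : ∀ i, M (a i))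
    (haU : ∀ i, U (a i)) (hbM : ∀ i j h, ¬M (b i j h)) (hbU : ∀ i j h, ¬U (b i j h)) :
    Function.Bijective (twist G a b) := by
  have (i : I) := h.isIso (haM i) (haU i)
  have hiso {i j : I} (f : X i ⟶ X j) (hM : ¬M f) (hU : ¬U f) (g : X j ⟶ X i) :
      IsIso (𝟙 (X i) - f ≫ g) :=
    h.isIso (h.left.sub (h.left.id_mem _) fun h' => hM (h.left.of_comp h'))
      (h.right.sub (h.right.id_mem _) fun h' => hU (h.right.of_comp h'))
  have hiso' {i j : I} (f : X i ⟶ X j) (hM : ¬M f) (hU : ¬U f) (g : X j ⟶ X i) :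
      IsIso (𝟙 (X j) - g ≫ f) := by
    have := hiso f hM hU g
    refine ⟨𝟙 _ + g ≫ inv (𝟙 (X i) - f ≫ g) ≫ f, ?_, ?_⟩
    · have h1 := IsIso.hom_inv_id (𝟙 (X i) - f ≫ g)
      simp only [Preadditive.sub_comp, Category.id_comp, Category.assoc] at h1
      have h2 := congrArg (fun t => g ≫ t ≫ f) h1
      simp only [Preadditive.sub_comp, Preadditive.comp_sub, Category.id_comp,
        Category.assoc] at h2
      simp only [Preadditive.sub_comp, Preadditive.comp_add, Category.id_comp, Category.comp_id,
        Category.assoc]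
      rw [← sub_eq_iff_eq_add'.2 (sub_eq_iff_eq_add.1 h2)]
      abel
    · have h1 := IsIso.inv_hom_id (𝟙 (X i) - f ≫ g)
      simp only [Preadditive.comp_sub, Category.comp_id] at h1
      have h2 := congrArg (fun t => g ≫ t ≫ f) h1
      simp only [Preadditive.sub_comp, Preadditive.comp_sub, Category.id_comp,
        Category.assoc] at h2
      simp only [Preadditive.add_comp, Preadditive.comp_sub, Category.id_comp, Category.comp_id,
        Category.assoc]
      rw [← sub_eq_iff_eq_add'.2 (sub_eq_iff_eq_add.1 h2)]
      abel
  let b' : ∀ i j, ρ i = j → (X j ⟶ X i) := fun i j e => -(inv (a j) ≫ b i j e ≫ inv (a i))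
  have h₁ : Function.Bijective (twist G (fun i => inv (a i)) b' ∘ₗ twist G a b) := by
    rw [twist_comp hρ]
    refine twist_zero_bijective hρ (fun i => ?_) fun i j e => by simp [b']
    have := hiso (b (ρ i) i (hρ i)) (hbM _ _ _) (hbU _ _ _)
      (inv (a (ρ i)) ≫ b i (ρ i) rfl ≫ inv (a i))
    simpa [b', ← sub_eq_add_neg] using this
  have h₂ : Function.Bijective (twist G a b ∘ₗ twist G (fun i => inv (a i)) b') := by
    rw [twist_comp hρ]
    refine twist_zero_bijective hρ (fun i => ?_) fun i j e => by simp [b']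
    have := hiso' (b i (ρ i) rfl) (hbM _ _ _) (hbU _ _ _)
      (inv (a i) ≫ b (ρ i) i (hρ i) ≫ inv (a (ρ i)))
    simpa [b', ← sub_eq_add_neg] using this
  rw [LinearMap.coe_comp] at h₁ h₂
  exact ⟨h₁.1.of_comp, h₂.2.of_comp⟩

theorem nonempty_equiv_of_involutive (h : IsPrimePair M U) (hρ : Function.Involutive ρ)
    {X Y : I → C} (hX : ∀ i, Generic M U (X i)) (hM : ∀ i, SameClass M (X i) (Y i))
    (hU : ∀ i, SameClass U (X (ρ i)) (Y i)) :
    Nonempty ((∀ i, G.obj (X i)) ≃ₗ[R] ∀ i, G.obj (Y i)) := by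
  have hY (i : I) : Generic M U (Y i) :=
    h.generic_of_sameClass (hX i) (hX (ρ i)) (hM i).symm (hU i).symm
  choose a haM haU using fun i => h.exists_hom (hX i).1 (hM i)
  choose a' haM' haU' using fun i => h.exists_hom (hY i).1 (hM i).symm
  have hU₁ (i j : I) (e : ρ i = j) : SameClass U (X j) (Y i) := e ▸ hU i
  have hU₂ (i j : I) (e : ρ i = j) : SameClass U (Y j) (X i) := by
    obtain rfl : i = ρ j := by rw [← e, hρ]
    exact (hU j).symm
  choose b hbU hbM using fun i j e => h.swap.exists_hom (hX j).2 (hU₁ i j e)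
  choose b' hbU' hbM' using fun i j e => h.swap.exists_hom (hY j).2 (hU₂ i j e)
  have key {X Y : I → C} (hX : ∀ i, Generic M U (X i)) {a : ∀ i, X i ⟶ Y i}
      {a' : ∀ i, Y i ⟶ X i} {b : ∀ i j, ρ i = j → (X j ⟶ Y i)}
      {b' : ∀ i j, ρ i = j → (Y j ⟶ X i)} (haM : ∀ i, M (a i)) (haU : ∀ i, ¬U (a i))
      (haM' : ∀ i, M (a' i)) (haU' : ∀ i, ¬U (a' i))
      (hbU : ∀ i j e, U (b i j e)) (hbM : ∀ i j e, ¬M (b i j e))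
      (hbU' : ∀ i j e, U (b' i j e)) (hbM' : ∀ i j e, ¬M (b' i j e)) :
      Function.Bijective (twist G a' b' ∘ₗ twist G a b) := by
    rw [twist_comp hρ]
    refine h.twist_bijective hρ (fun i => ?_) (fun i => ?_) (fun i j e hc => ?_)
      fun i j e hc => ?_
    · exact h.left.add (h.left.comp_mem (haM i) (haM' i)) fun hc => hbM _ _ _ (h.left.of_comp hc)
    · rw [add_comm]
      exact h.right.add (h.right.comp_mem (hbU _ _ _) (hbU' _ _ _))
        fun hc => haU _ (h.right.of_comp hc)
    · rcases h.left.of_add hc with hc | hc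
      · exact hbM _ _ _ (h.left.of_comp hc)
      · exact hbM' _ _ _ (h.swap.of_comp_right (hX j).2 hc)
    · rcases h.right.of_add hc with hc | hc
      · exact haU' _ (h.of_comp_right (hX j).1 hc)
      · exact haU _ (h.right.of_comp hc)
  have h₁ := key hX haM haU haM' haU' hbU hbM hbU' hbM'
  have h₂ := key hY haM' haU' haM haU hbU' hbM' hbU hbM
  rw [LinearMap.coe_comp] at h₁ h₂
  exact ⟨LinearEquiv.ofBijective (twist G a b) ⟨h₁.1.of_comp, h₂.2.of_comp⟩⟩

theorem nonempty_equiv_of_generic (h : IsPrimePair M U) (hP : HasWeakPullbacks M U)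
    {X Y : I → C} (π : Equiv.Perm I) (hX : ∀ i, Generic M U (X i))
    (hM : ∀ i, SameClass M (X i) (Y i)) (hU : ∀ i, SameClass U (X i) (Y (π i))) :
    Nonempty ((∀ i, G.obj (X i)) ≃ₗ[R] ∀ i, G.obj (Y i)) := by
  let r : Setoid I :=
    { r i j := ∃ W, SameClass M W (X i) ∧ SameClass U W (X j)
      iseqv := by
        have refl (i : I) : ∃ W, SameClass M W (X i) ∧ SameClass U W (X i) :=
          ⟨X i, h.left.sameClass_refl _, h.right.sameClass_refl _⟩
        have exch {i j k l : I} :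
            (∃ W, SameClass M W (X i) ∧ SameClass U W (X j)) →
            (∃ W, SameClass M W (X k) ∧ SameClass U W (X l)) →
            (∃ W, SameClass M W (X k) ∧ SameClass U W (X j)) →
            ∃ W, SameClass M W (X i) ∧ SameClass U W (X l) := by
          rintro ⟨P, hPi, hPj⟩ ⟨Q, hQk, hQl⟩ ⟨Z, hZk, hZj⟩
          obtain ⟨W, hWP, hWQ⟩ := h.exists_exchange hP
            (h.generic_of_sameClass (hX i) (hX j) hPi hPj)
            (h.generic_of_sameClass (hX k) (hX l) hQk hQl)
            (h.left.sameClass_trans hQk hZk.symm) (h.right.sameClass_trans hPj hZj.symm)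
          exact ⟨W, h.left.sameClass_trans hWP hPi, h.right.sameClass_trans hWQ hQl⟩
        exact ⟨refl, fun hij => exch (refl _) (refl _) hij, fun hij hjk => exch hij hjk (refl _)⟩ }
  have hinv (i : I) : π (π⁻¹ i) = i := π.apply_symm_apply i
  have hr {i j : I} (hij : π.SameCycle i j) : r i j := by
    have hπ (i : I) : r i (π i) :=
      r.symm ⟨Y (π i), (hM _).symm, (hU i).symm⟩
    obtain ⟨n, rfl⟩ := hij
    induction n with
    | zero => exact r.refl _
    | succ n ih =>
      rw [add_comm, zpow_add, zpow_one, Equiv.Perm.mul_apply]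
      exact r.trans ih (hπ _)
    | pred n ih =>
      refine r.trans ih (r.symm ?_)
      convert hπ _ using 1
      rw [sub_eq_neg_add, zpow_add, zpow_neg_one, Equiv.Perm.mul_apply, hinv]
  obtain ⟨ρ, hρ, hρπ, hρc⟩ := exists_involutive_reversing π
  choose Z hZM hZU using fun i => hr (hρc i)
  have hZ (i : I) : Generic M U (Z i) :=
    h.generic_of_sameClass (hX i) (hX (ρ i)) (hZM i) (hZU i)
  obtain ⟨e₁⟩ := h.nonempty_equiv_of_involutive (G := G) hρ hX (fun i => (hZM i).symm)
    fun i => (hZU i).symm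
  have hρ' : Function.Involutive fun i => ρ (π⁻¹ i) := fun i => by
    have := hρπ (π⁻¹ i)
    rw [hinv] at this
    simp only [← this, hρ i]
  obtain ⟨e₂⟩ := h.nonempty_equiv_of_involutive (G := G) hρ' hZ
    (fun i => h.left.sameClass_trans (hZM i) (hM i)) fun i => by
      have h₁ := hZU (ρ (π⁻¹ i))
      have h₂ := hU (π⁻¹ i)
      rw [hinv] at h₂
      rw [hρ] at h₁
      exact h.right.sameClass_trans h₁ h₂
  exact ⟨e₁.trans e₂⟩

theorem separates_iff (h : IsPrimePair M U) {X Y : C} (hXY : SameClass M X Y) :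
    Separates U M X ↔ Separates U M Y :=
  ⟨h.separates_of_sameClass hXY.symm, h.separates_of_sameClass hXY⟩

theorem separates_iff_swap (h : IsPrimePair M U) {X Y : C} (hXY : SameClass U X Y) :
    Separates U M X ↔ Separates U M Y := by
  constructor <;> intro hs <;> by_contra hn
  · obtain ⟨e⟩ := h.nonempty_iso_of_not_separates hn hXY.symm
    exact hn (h.separates_of_iso e hs)
  · obtain ⟨e⟩ := h.nonempty_iso_of_not_separates hn hXY
    exact hn (h.separates_of_iso e hs)

theorem nonempty_equiv_of_separates (h : IsPrimePair M U) (hP : HasWeakPullbacks M U)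
    {X Y : I → C} (π : Equiv.Perm I) (hX : ∀ i, Separates M U (X i))
    (hM : ∀ i, SameClass M (X i) (Y i)) (hU : ∀ i, SameClass U (X i) (Y (π i))) :
    Nonempty ((∀ i, G.obj (X i)) ≃ₗ[R] ∀ i, G.obj (Y i)) := by
  have hπ (i : I) : Separates U M (X (π i)) ↔ Separates U M (X i) :=
    (h.separates_iff (hM _)).trans (h.separates_iff_swap (hU i)).symm
  have hπ' (i : I) : ¬Separates U M (X (π i)) ↔ ¬Separates U M (X i) := (hπ i).not
  refine nonempty_equiv_of_subtype (fun i => Separates U M (X i)) ?_ ?_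
  · exact h.nonempty_equiv_of_generic hP
      (I := {i // Separates U M (X i)}) (X := fun i => X i) (Y := fun i => Y i)
      (π.subtypePerm hπ) (fun i => ⟨hX i, i.2⟩) (fun i => hM i) fun i => hU i
  · have e (i : {i // ¬Separates U M (X i)}) : X i ≅ Y (π i) :=
      (h.nonempty_iso_of_not_separates i.2 (hU i)).some
    exact ⟨(LinearEquiv.piCongrRight fun i => (G.mapIso (e i)).toLinearEquiv).trans
      (LinearEquiv.piCongrLeft R (fun i : {i // ¬Separates U M (X i)} => G.obj (Y i))
        (π.subtypePerm hπ'))⟩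

/-- A weak Krull-Schmidt theorem for direct products. -/
theorem nonempty_equiv (h : IsPrimePair M U) (hP : HasWeakPullbacks M U) {X Y : I → C}
    (π : Equiv.Perm I) (hM : ∀ i, SameClass M (X i) (Y i))
    (hU : ∀ i, SameClass U (X i) (Y (π i))) :
    Nonempty ((∀ i, G.obj (X i)) ≃ₗ[R] ∀ i, G.obj (Y i)) := by
  have hπ (i : I) : Separates M U (X (π i)) ↔ Separates M U (X i) :=
    (h.swap.separates_iff_swap (hM _)).trans (h.swap.separates_iff (hU i)).symm
  refine nonempty_equiv_of_subtype (fun i => Separates M U (X i)) ?_ ?_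
  · exact h.nonempty_equiv_of_separates hP
      (I := {i // Separates M U (X i)}) (X := fun i => X i) (Y := fun i => Y i)
      (π.subtypePerm hπ) (fun i => i.2) (fun i => hM i) fun i => hU i
  · have e (i : {i // ¬Separates M U (X i)}) : X i ≅ Y i :=
      (h.swap.nonempty_iso_of_not_separates i.2 (hM i)).some
    exact ⟨LinearEquiv.piCongrRight fun i => (G.mapIso (e i)).toLinearEquiv⟩

end IsPrimePair

end Twist

end Abstract

section Modules

variable {R : Type*} [Ring R]

/-- `Q` is injective relative to `G`. -/
def RelInjective (R : Type*) [Ring R] (G Q : Type*) [AddCommGroup G] [Module R G]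
    [AddCommGroup Q] [Module R Q] : Prop :=
  ∀ (S : Submodule R G) (f : S →ₗ[R] Q), ∃ g : G →ₗ[R] Q, ∀ s : S, g s = f s

/-- `S` is not the intersection of two strictly larger submodules. -/
def MeetIrreducible {E : Type*} [AddCommGroup E] [Module R E] (S : Submodule R E) : Prop :=
  ∀ ⦃b c : Submodule R E⦄, b ⊓ c = S → b = S ∨ c = S

section

variable {E E' : Type*} [AddCommGroup E] [Module R E] [AddCommGroup E'] [Module R E']

theorem MeetIrreducible.comap {S : Submodule R E'} (hS : MeetIrreducible S) (f : E →ₗ[R] E') :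
    MeetIrreducible (S.comap f) := by
  intro b c hbc
  have hb : S.comap f ≤ b := hbc ▸ inf_le_left
  have hc : S.comap f ≤ c := hbc ▸ inf_le_right
  have h : (b.map f ⊔ S) ⊓ (c.map f ⊔ S) = S := by
    refine le_antisymm ?_ (le_inf le_sup_right le_sup_right)
    rintro y ⟨hyb, hyc⟩
    obtain ⟨_, ⟨x, hx, rfl⟩, s, hs, rfl⟩ := Submodule.mem_sup.1 hyb
    obtain ⟨_, ⟨z, hz, rfl⟩, t, ht, hzt⟩ := Submodule.mem_sup.1 hyc
    have hxz : x - z ∈ S.comap f := by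
      rw [Submodule.mem_comap, map_sub, show f x - f z = t - s by
        rw [sub_eq_sub_iff_add_eq_add, ← hzt, add_comm]]
      exact S.sub_mem ht hs
    have hxc : x ∈ c := by simpa using c.add_mem (hc hxz) hz
    have hxS : x ∈ S.comap f := hbc ▸ Submodule.mem_inf.2 ⟨hx, hxc⟩
    exact S.add_mem hxS hs
  refine (hS h).imp (fun h' => le_antisymm ?_ hb) fun h' => le_antisymm ?_ hc
  · exact Submodule.map_le_iff_le_comap.1 (le_sup_left.trans h'.le)
  · exact Submodule.map_le_iff_le_comap.1 (le_sup_left.trans h'.le)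

theorem bijective_of_injective (hinj : RelInjective R E' E) (hE : Nontrivial E)
    (hE' : MeetIrreducible (⊥ : Submodule R E')) {f : E →ₗ[R] E'} (hf : Function.Injective f) :
    Function.Bijective f := by
  obtain ⟨g, hg⟩ := hinj (LinearMap.range f) (LinearEquiv.ofInjective f hf).symm
  have hgf (x : E) : g (f x) = x := by
    have h := hg ⟨f x, x, rfl⟩
    rw [h]
    exact (LinearEquiv.ofInjective f hf).symm_apply_apply x
  have h : LinearMap.range f ⊓ LinearMap.ker g = ⊥ := by
    rw [eq_bot_iff]
    rintro _ ⟨⟨x, rfl⟩, hx⟩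
    have hx0 : x = 0 := by rw [← hgf x, hx]
    simp [hx0]
  refine ⟨hf, fun y => ⟨g y, ?_⟩⟩
  rcases hE' h with h | h
  · obtain ⟨x, hx⟩ := exists_ne (0 : E)
    exact absurd (hf (((LinearMap.range_eq_bot.1 h ▸ rfl : f x = 0)).trans (map_zero f).symm)) hx
  · have : y - f (g y) ∈ LinearMap.ker g := by simp [hgf]
    rw [h, Submodule.mem_bot, sub_eq_zero] at this
    exact this.symm

/-- A submodule of `E` maximal among those disjoint from `D`, and above a given one. -/
theorem exists_maximal_disjoint {C D : Submodule R E} (h : Disjoint C D) :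
    ∃ C', C ≤ C' ∧ Maximal (fun X => Disjoint X D) C' := by
  refine zorn_le_nonempty₀ {X | Disjoint X D} (fun c hc hchain X hX => ?_) C h
  refine ⟨sSup c, ?_, fun _ => le_sSup⟩
  rw [Set.mem_ofPred_eq, Submodule.disjoint_def]
  intro x hx hxD
  obtain ⟨Y, hY, hxY⟩ := (Submodule.mem_sSup_of_directed ⟨X, hX⟩ hchain.directedOn).1 hx
  exact Submodule.disjoint_def.1 (hc hY) x hxY hxD

theorem meetIrreducible_bot_of_relInjective (hE : IsIndecomposableModule R E)
    (hinj : RelInjective R E E) :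
    MeetIrreducible (⊥ : Submodule R E) := by
  intro C D hCD
  obtain ⟨D', hD, hD'⟩ := exists_maximal_disjoint (disjoint_iff.2 hCD).symm
  obtain ⟨C', hC, hC'⟩ := exists_maximal_disjoint hD'.prop.symm
  have hdisj : Disjoint C' D' := hC'.prop
  obtain ⟨p, hpC, hpD⟩ : ∃ p : E →ₗ[R] E, (∀ x ∈ C', p x = x) ∧ ∀ x ∈ D', p x = 0 := by
    let k : C' × D' →ₗ[R] E := C'.subtype.coprod D'.subtype
    have hk : Function.Injective k := by
      rw [← LinearMap.ker_eq_bot, LinearMap.ker_coprod_of_disjoint_range _ _ (by simpa)]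
      simp
    let e := LinearEquiv.ofInjective k hk
    obtain ⟨p, hp⟩ := hinj (LinearMap.range k) (C'.subtype ∘ₗ LinearMap.fst R C' D' ∘ₗ e.symm)
    have hp' (z : C' × D') : p (k z) = z.1 := by
      refine (hp (e z)).trans ?_
      simp
    exact ⟨p, fun x hx => by simpa [k] using hp' (⟨x, hx⟩, 0),
      fun x hx => by simpa [k] using hp' (0, ⟨x, hx⟩)⟩
  have hker : LinearMap.ker p = D' := by
    refine (hD'.eq_of_le ?_ hpD).symm
    rw [Submodule.disjoint_def]
    intro x hx hxC
    rw [← hpC x (hC hxC)]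
    exact hx
  have hrange : LinearMap.range p = C' := by
    refine (hC'.eq_of_le ?_ fun x hx => LinearMap.mem_range.2 ⟨x, hpC x hx⟩).symm
    rw [Submodule.disjoint_def]
    rintro _ ⟨x, rfl⟩ hx
    by_contra hne
    have hxD : x ∉ D' := fun h => hne (hpD x h)
    have hnot : ¬Disjoint (D' ⊔ R ∙ x) C := fun h =>
      hxD <| hD'.le_of_ge h le_sup_left <|
        le_sup_right (a := D') (Submodule.mem_span_singleton_self x)
    rw [Submodule.disjoint_def] at hnot
    push Not at hnot
    obtain ⟨c, hc, hcC, hc0⟩ := hnot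
    obtain ⟨d, hd, y, hy, rfl⟩ := Submodule.mem_sup.1 hc
    obtain ⟨r, rfl⟩ := Submodule.mem_span_singleton.1 hy
    have h := hpC _ (hC hcC)
    rw [map_add, hpD d hd, zero_add, map_smul] at h
    exact hc0 (Submodule.disjoint_def.1 hdisj _ (hC hcC) (h ▸ D'.smul_mem r hx))
  have htop : C' ⊔ D' = ⊤ := by
    rw [eq_top_iff]
    intro x _
    have hpx : p x ∈ C' := hrange ▸ LinearMap.mem_range_self p x
    refine Submodule.mem_sup.2 ⟨p x, hpx, x - p x, ?_, by simp⟩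
    rw [← hker, LinearMap.mem_ker, map_sub, hpC _ hpx, sub_self]
  exact (hE.2 C' D' hdisj.eq_bot htop).imp (fun h => le_bot_iff.1 (hC.trans h.le))
    fun h => le_bot_iff.1 (hD.trans h.le)

/-- Monomorphisms out of essential submodules extend to monomorphisms. -/
theorem exists_injective_extension (hinj : RelInjective R E E')
    (hE : MeetIrreducible (⊥ : Submodule R E)) {A : Submodule R E} (hA : A ≠ ⊥)
    {f : A →ₗ[R] E'} (hf : Function.Injective f) :
    ∃ g : E →ₗ[R] E', Function.Injective g ∧ ∀ a : A, g a = f a := by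
  obtain ⟨g, hg⟩ := hinj A f
  refine ⟨g, LinearMap.ker_eq_bot.1 ((hE ?_).resolve_right hA), hg⟩
  rw [eq_bot_iff]
  rintro x ⟨hx, hxA⟩
  have h : f ⟨x, hxA⟩ = f 0 := by rw [← hg, map_zero]; exact hx
  simpa using congrArg Subtype.val (hf h)

end

universe w

/-- An object of `IrreduciblePair Q` is a meet-irreducible submodule of one of the modules
`Q k`. -/
structure IrreduciblePair {K : Type*} (Q : K → ModuleCat.{w} R) where
  /-- the index of the ambient module -/
  idx : K
  /-- the submodule -/
  sub : Submodule R (Q idx)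
  irreducible : MeetIrreducible sub

namespace IrreduciblePair

variable {K : Type*} {Q : K → ModuleCat.{w} R}

/-- The homomorphisms between the ambient modules compatible with the submodules. -/
def homs (X Y : IrreduciblePair Q) : AddSubgroup (Q X.idx →ₗ[R] Q Y.idx) where
  carrier := {f | X.sub ≤ Y.sub.comap f}
  zero_mem' _ _ := Y.sub.zero_mem
  add_mem' hf hg _ hx := Y.sub.add_mem (hf hx) (hg hx)
  neg_mem' hf _ hx := Y.sub.neg_mem (hf hx)

instance : Category (IrreduciblePair Q) where
  Hom X Y := homs X Y
  id X := ⟨LinearMap.id, fun _ hx => hx⟩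
  comp f g := ⟨g.1 ∘ₗ f.1, fun _ hx => g.2 (f.2 hx)⟩

instance : Preadditive (IrreduciblePair Q) where
  homGroup X Y := inferInstanceAs (AddCommGroup (homs X Y))
  add_comp _ _ _ f f' g := Subtype.ext (LinearMap.comp_add f.1 f'.1 g.1)
  comp_add _ _ _ f g g' := Subtype.ext (LinearMap.add_comp f.1 g'.1 g.1)

variable {X Y Z : IrreduciblePair Q}

/-- The homomorphism of ambient modules. -/
def amb (f : X ⟶ Y) : Q X.idx →ₗ[R] Q Y.idx := f.1

theorem amb_mem (f : X ⟶ Y) {x : Q X.idx} (hx : x ∈ X.sub) : amb f x ∈ Y.sub := f.2 hx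

@[ext]
theorem hom_ext {f g : X ⟶ Y} (h : ∀ x, amb f x = amb g x) : f = g :=
  Subtype.ext (LinearMap.ext h)

/-- A morphism from a compatible homomorphism of ambient modules. -/
def mk' (f : Q X.idx →ₗ[R] Q Y.idx) (hf : ∀ x ∈ X.sub, f x ∈ Y.sub) : X ⟶ Y := ⟨f, hf⟩

@[simp] theorem amb_comp (f : X ⟶ Y) (g : Y ⟶ Z) : amb (f ≫ g) = amb g ∘ₗ amb f := rfl

/-- The functor sending a pair to its submodule. -/
def toModuleCat : IrreduciblePair Q ⥤ ModuleCat.{w} R where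
  obj X := ModuleCat.of R X.sub
  map f := ModuleCat.ofHom ((amb f).restrict fun _ hx => amb_mem f hx)
  map_id _ := rfl
  map_comp _ _ := rfl

instance : (toModuleCat (Q := Q)).Additive where
  map_add := rfl

theorem hasPrimeComplement (S : ∀ X : IrreduciblePair Q, Submodule R (Q X.idx))
    (hS : ∀ {X Y : IrreduciblePair Q} (f : X ⟶ Y), S X ≤ (S Y).comap (amb f))
    (hirr : ∀ X, MeetIrreducible (S X)) :
    HasPrimeComplement (C := IrreduciblePair Q) fun X Y f => (S Y).comap (amb f) ≤ S X where
  id_mem _ _ hx := hx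
  comp_mem hf hg _ hx := hf (hg hx)
  of_comp {_ _ _ _ g} h _ hx := h (hS g hx)
  of_comp_right {X Y Z f g} h := by
    by_cases htop : S X = ⊤
    · exact .inr (htop ▸ le_top)
    refine .inl ?_
    have hinf : ((S Z).comap (amb g)) ⊓ (LinearMap.range (amb f) ⊔ S Y) = S Y := by
      refine le_antisymm ?_ (le_inf (hS g) le_sup_right)
      rintro y ⟨hy, hy'⟩
      obtain ⟨_, ⟨x, rfl⟩, s, hs, rfl⟩ := Submodule.mem_sup.1 hy'
      refine (S Y).add_mem (hS f (h ?_)) hs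
      have := (S Z).sub_mem hy (hS g hs)
      simpa using this
    refine ((hirr Y hinf).resolve_right fun h' => htop ?_).le
    rw [eq_top_iff]
    intro x _
    have hx : amb f x ∈ S Y := by
      rw [← h']
      exact (le_sup_left : LinearMap.range (amb f) ≤ _) (LinearMap.mem_range_self _ x)
    exact h (hS g hx)
  of_add {X Y f g} h := by
    have hinf : (S Y).comap (amb f) ⊓ (S Y).comap (amb g) = S X :=
      le_antisymm (fun x hx => h ((S Y).add_mem hx.1 hx.2)) (le_inf (hS f) (hS g))
    exact (hirr X hinf).imp (fun h => h.le) fun h => h.le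

/-- The morphisms which are injective on the ambient modules. -/
def ambMono (Q : K → ModuleCat.{w} R) : MorphismProperty (IrreduciblePair Q) :=
  fun _ Y f => (⊥ : Submodule R (Q Y.idx)).comap (amb f) ≤ ⊥

/-- The morphisms which are injective on the quotients by the submodules. -/
def quotMono (Q : K → ModuleCat.{w} R) : MorphismProperty (IrreduciblePair Q) :=
  fun X Y f => Y.sub.comap (amb f) ≤ X.sub

theorem ambMono_iff {f : X ⟶ Y} : ambMono Q f ↔ Function.Injective (amb f) := by
  rw [← LinearMap.ker_eq_bot, ambMono, le_bot_iff]
  rfl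

theorem ambMono_bijective (hinj : ∀ k l, RelInjective R (Q k) (Q l))
    (hnt : ∀ k, Nontrivial (Q k)) (hirr : ∀ k, MeetIrreducible (⊥ : Submodule R (Q k)))
    {f : X ⟶ Y} (hf : ambMono Q f) : Function.Bijective (amb f) :=
  bijective_of_injective (hinj _ _) (hnt _) (hirr _) (ambMono_iff.1 hf)

theorem isPrimePair (hinj : ∀ k l, RelInjective R (Q k) (Q l)) (hnt : ∀ k, Nontrivial (Q k))
    (hirr : ∀ k, MeetIrreducible (⊥ : Submodule R (Q k))) :
    IsPrimePair (ambMono Q) (quotMono Q) where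
  left := hasPrimeComplement (fun _ => ⊥) (fun _ => by simp) fun X => hirr X.idx
  right := hasPrimeComplement (fun X => X.sub) (fun f => f.2) fun X => X.irreducible
  isIso {_ Y f} hM hU := by
    let e := LinearEquiv.ofBijective (amb f) (ambMono_bijective hinj hnt hirr hM)
    refine ⟨mk' e.symm.toLinearMap fun y hy => hU ?_, ?_, ?_⟩
    · change e (e.symm y) ∈ Y.sub
      rwa [e.apply_symm_apply]
    · ext x
      exact e.symm_apply_apply x
    · ext y
      exact e.apply_symm_apply y

theorem hasWeakPullbacks (hinj : ∀ k l, RelInjective R (Q k) (Q l)) (hnt : ∀ k, Nontrivial (Q k))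
    (hirr : ∀ k, MeetIrreducible (⊥ : Submodule R (Q k))) :
    IsPrimePair.HasWeakPullbacks (ambMono Q) (quotMono Q) := by
  intro X Y Z b a hb ha
  let e := LinearEquiv.ofBijective (amb a) (ambMono_bijective hinj hnt hirr ha)
  let n : Q X.idx →ₗ[R] Q Y.idx := e.symm.toLinearMap ∘ₗ amb b
  have hn (x : Q X.idx) : amb a (n x) = amb b x := e.apply_symm_apply _
  let W : IrreduciblePair Q := ⟨X.idx, Y.sub.comap n, Y.irreducible.comap n⟩
  let p : W ⟶ X := mk' (X := W) LinearMap.id fun x hx => hb <| by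
    rw [LinearMap.id_apply, Submodule.mem_comap, ← hn]
    exact amb_mem a hx
  let q : W ⟶ Y := mk' (X := W) n fun x hx => hx
  refine ⟨W, p, q, ambMono_iff.2 Function.injective_id, fun _ hx => hx, fun T s t hst => ?_⟩
  have hst' (x : Q T.idx) : n (amb s x) = amb t x := by
    refine (ambMono_iff.1 ha) ?_
    rw [hn]
    exact congrArg (fun f => amb f x) hst
  let s' : Q T.idx →ₗ[R] Q W.idx := amb (Y := X) s
  refine ⟨mk' s' fun x hx => ?_, hom_ext fun _ => rfl, hom_ext fun x => hst' x⟩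
  change x ∈ T.sub at hx
  rw [Submodule.mem_comap, hst']
  exact amb_mem t hx

end IrreduciblePair

end Modules

section Products

universe v w

variable {R : Type*} [Ring R]

theorem RelInjective.of_equiv {G Q Q' : Type*} [AddCommGroup G] [Module R G] [AddCommGroup Q]
    [Module R Q] [AddCommGroup Q'] [Module R Q'] (h : RelInjective R G Q) (e : Q ≃ₗ[R] Q') :
    RelInjective R G Q' := by
  intro S f
  obtain ⟨g, hg⟩ := h S (e.symm.toLinearMap ∘ₗ f)
  exact ⟨e.toLinearMap ∘ₗ g, fun s => by simp [hg]⟩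

theorem relInjective_of_small {G : Type*} {Q : Type w} [AddCommGroup G] [Module R G]
    [AddCommGroup Q] [Module R Q] (hQ : Module.Injective R Q) [Small.{w} G] :
    RelInjective R G Q := by
  intro S f
  have : Small.{w} S := small_of_injective Subtype.val_injective
  let e := Shrink.linearEquiv R G
  let d := Shrink.linearEquiv R S
  obtain ⟨g, hg⟩ := hQ.out (e.symm.toLinearMap ∘ₗ S.subtype ∘ₗ d.toLinearMap)
    (e.symm.injective.comp (Subtype.val_injective.comp d.injective)) (f ∘ₗ d.toLinearMap)
  exact ⟨g ∘ₗ e.symm.toLinearMap, fun s => by simpa using hg (d.symm s)⟩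

theorem small_of_small_quotient {E : Type*} [AddCommGroup E] [Module R E] (A : Submodule R E)
    (hA : Small.{w} A) (hE : Small.{w} (E ⧸ A)) : Small.{w} E := by
  have hmk (q : E ⧸ A) : A.mkQ q.out = q := Quotient.out_eq q
  refine small_of_injective (β := (E ⧸ A) × A)
    (f := fun x => (A.mkQ x, ⟨x - (A.mkQ x).out, ?_⟩)) fun x y hxy => ?_
  · rw [← Submodule.Quotient.mk_eq_zero, ← Submodule.mkQ_apply, map_sub, hmk, sub_self]
  · obtain ⟨h₁, h₂⟩ := Prod.mk.inj hxy
    simpa [h₁] using congrArg Subtype.val h₂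

theorem small_of_comap_eq {E F F' : Type*} [AddCommGroup E] [Module R E] [AddCommGroup F]
    [Module R F] [AddCommGroup F'] [Module R F'] [Small.{w} F] [Small.{w} F']
    {A : Submodule R E} {B : Submodule R F} {f : A →ₗ[R] F'} (hf : Function.Injective f)
    {φ : E →ₗ[R] F} (hφ : B.comap φ = A) : Small.{w} E := by
  have : Small.{w} (F ⧸ B) := small_of_surjective B.mkQ_surjective
  refine small_of_small_quotient A (small_of_injective hf)
    (small_of_injective (f := A.mapQ B φ hφ.ge) ?_)
  rw [← LinearMap.ker_eq_bot, Submodule.mapQ, Submodule.ker_liftQ_eq_bot']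
  rw [LinearMap.ker_comp, Submodule.ker_mkQ, hφ]

/-- The case in which all modules live in the same universe. -/
theorem nonempty_pi_equiv_of_sameUniverse {I J : Type*} {E : I → Type w} {F : J → Type w}
    [∀ i, AddCommGroup (E i)] [∀ i, Module R (E i)] [∀ j, AddCommGroup (F j)]
    [∀ j, Module R (F j)] {A : ∀ i, Submodule R (E i)} {B : ∀ j, Submodule R (F j)}
    (hEE : ∀ i i', RelInjective R (E i) (E i')) (hEF : ∀ i j, RelInjective R (E i) (F j))
    (hFE : ∀ j i, RelInjective R (F j) (E i)) (hFF : ∀ j j', RelInjective R (F j) (F j'))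
    (hE : ∀ i, MeetIrreducible (⊥ : Submodule R (E i)))
    (hF : ∀ j, MeetIrreducible (⊥ : Submodule R (F j)))
    (hA : ∀ i, MeetIrreducible (A i)) (hB : ∀ j, MeetIrreducible (B j))
    (hA₀ : ∀ i, A i ≠ ⊥) (hB₀ : ∀ j, B j ≠ ⊥) (σ τ : I ≃ J)
    (hm : ∀ i, SameMonogenyClass R (A i) (B (σ i)))
    (hu : ∀ i, ∃ (φ : E i →ₗ[R] F (τ i)) (ψ : F (τ i) →ₗ[R] E i),
      (B (τ i)).comap φ = A i ∧ (A i).comap ψ = B (τ i)) :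
    Nonempty ((∀ i, A i) ≃ₗ[R] ∀ j, B j) := by
  let Q : I ⊕ J → ModuleCat.{w} R :=
    Sum.elim (fun i => ModuleCat.of R (E i)) fun j => ModuleCat.of R (F j)
  have hinj : ∀ k l, RelInjective R (Q k) (Q l) := by
    rintro (i | j) (i' | j')
    exacts [hEE i i', hEF i j', hFE j i', hFF j j']
  have hnt : ∀ k, Nontrivial (Q k) := by
    rintro (i | j)
    · exact (Submodule.nontrivial_iff R (M := E i)).1 ⟨_, _, hA₀ i⟩
    · exact (Submodule.nontrivial_iff R (M := F j)).1 ⟨_, _, hB₀ j⟩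
  have hirr : ∀ k, MeetIrreducible (⊥ : Submodule R (Q k)) := by
    rintro (i | j)
    exacts [hE i, hF j]
  let X (i : I) : IrreduciblePair Q := ⟨.inl i, A i, hA i⟩
  let Y (j : J) : IrreduciblePair Q := ⟨.inr j, B j, hB j⟩
  have hM (i : I) : SameClass (IrreduciblePair.ambMono Q) (X i) (Y (σ i)) := by
    obtain ⟨⟨f, hf⟩, g, hg⟩ := hm i
    obtain ⟨f', hf', hff'⟩ := exists_injective_extension (hEF i (σ i)) (hE i) (hA₀ i)
      (f := (B (σ i)).subtype ∘ₗ f) (Subtype.val_injective.comp hf)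
    obtain ⟨g', hg', hgg'⟩ := exists_injective_extension (hFE (σ i) i) (hF (σ i)) (hB₀ (σ i))
      (f := (A i).subtype ∘ₗ g) (Subtype.val_injective.comp hg)
    refine ⟨⟨IrreduciblePair.mk' (X := X i) (Y := Y (σ i)) f' fun x hx => ?_,
      IrreduciblePair.ambMono_iff.2 hf'⟩,
      IrreduciblePair.mk' (X := Y (σ i)) (Y := X i) g' fun x hx => ?_,
      IrreduciblePair.ambMono_iff.2 hg'⟩
    · exact (hff' ⟨x, hx⟩).symm ▸ (f ⟨x, hx⟩).2
    · exact (hgg' ⟨x, hx⟩).symm ▸ (g ⟨x, hx⟩).2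
  have hU (i : I) : SameClass (IrreduciblePair.quotMono Q) (X i) (Y (τ i)) := by
    obtain ⟨φ, ψ, hφ, hψ⟩ := hu i
    exact ⟨⟨IrreduciblePair.mk' (X := X i) (Y := Y (τ i)) φ hφ.ge, hφ.le⟩,
      IrreduciblePair.mk' (X := Y (τ i)) (Y := X i) ψ hψ.ge, hψ.le⟩
  obtain ⟨e⟩ := (IrreduciblePair.isPrimePair hinj hnt hirr).nonempty_equiv
    (G := IrreduciblePair.toModuleCat) (IrreduciblePair.hasWeakPullbacks hinj hnt hirr)
    (X := X) (Y := fun i => Y (σ i)) (τ.trans σ.symm) hM fun i => by simpa using hU i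
  let e' : (∀ i, A i) ≃ₗ[R] ∀ i, B (σ i) := e
  exact ⟨e'.trans (LinearEquiv.piCongrLeft R (fun j => B j) σ)⟩

/-- Direct products of meet-irreducible submodules of indecomposable injective modules are
isomorphic if their monogeny classes and upper parts match. -/
theorem nonempty_pi_equiv {I J : Type*} {E : I → Type v} {F : J → Type w}
    [∀ i, AddCommGroup (E i)] [∀ i, Module R (E i)] [∀ j, AddCommGroup (F j)]
    [∀ j, Module R (F j)] {A : ∀ i, Submodule R (E i)} {B : ∀ j, Submodule R (F j)}
    (hEinj : ∀ i, Module.Injective R (E i)) (hFinj : ∀ j, Module.Injective R (F j))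
    (hE : ∀ i, MeetIrreducible (⊥ : Submodule R (E i)))
    (hF : ∀ j, MeetIrreducible (⊥ : Submodule R (F j)))
    (hA : ∀ i, MeetIrreducible (A i)) (hB : ∀ j, MeetIrreducible (B j))
    (hA₀ : ∀ i, A i ≠ ⊥) (hB₀ : ∀ j, B j ≠ ⊥) (σ τ : I ≃ J)
    (hm : ∀ i, SameMonogenyClass R (A i) (B (σ i)))
    (hu : ∀ i, ∃ (φ : E i →ₗ[R] F (τ i)) (ψ : F (τ i) →ₗ[R] E i),
      (B (τ i)).comap φ = A i ∧ (A i).comap ψ = B (τ i)) :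
    Nonempty ((∀ i, A i) ≃ₗ[R] ∀ j, B j) := by
  have hEsmall (i : I) : Small.{w} (E i) := by
    obtain ⟨⟨f, hf⟩, -⟩ := hm i
    obtain ⟨φ, -, hφ, -⟩ := hu i
    exact small_of_comap_eq (f := (B (σ i)).subtype ∘ₗ f) (Subtype.val_injective.comp hf) hφ
  have hFsmall (j : J) : Small.{v} (F j) := by
    obtain ⟨k, rfl⟩ := τ.surjective j
    obtain ⟨l, hl⟩ := σ.surjective (τ k)
    have hl' := (hm l).2
    rw [hl] at hl'
    obtain ⟨g, hg⟩ := hl'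
    obtain ⟨-, ψ, -, hψ⟩ := hu k
    exact small_of_comap_eq (f := (A l).subtype ∘ₗ g) (Subtype.val_injective.comp hg) hψ
  let e (i : I) : Shrink.{w} (E i) ≃ₗ[R] E i := Shrink.linearEquiv R (E i)
  have hshrink (i : I) : Small.{v} (Shrink.{w} (E i)) := small_of_injective (e i).injective
  let A' (i : I) : Submodule R (Shrink.{w} (E i)) := (A i).comap (e i).toLinearMap
  let d (i : I) : A' i ≃ₗ[R] A i := (e i).ofSubmodule' (A i)
  have hA' (i : I) : A' i ≠ ⊥ := fun h => hA₀ i <| by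
    have : Subsingleton (A' i) := Submodule.subsingleton_iff_eq_bot.2 h
    exact Submodule.subsingleton_iff_eq_bot.1 (d i).symm.injective.subsingleton
  have hm' (i : I) : SameMonogenyClass R (A' i) (B (σ i)) := by
    obtain ⟨⟨f, hf⟩, g, hg⟩ := hm i
    exact ⟨⟨f ∘ₗ (d i).toLinearMap, hf.comp (d i).injective⟩,
      (d i).symm.toLinearMap ∘ₗ g, (d i).symm.injective.comp hg⟩
  have hu' (i : I) : ∃ (φ : Shrink.{w} (E i) →ₗ[R] F (τ i)) (ψ : F (τ i) →ₗ[R] Shrink.{w} (E i)),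
      (B (τ i)).comap φ = A' i ∧ (A' i).comap ψ = B (τ i) := by
    obtain ⟨φ, ψ, hφ, hψ⟩ := hu i
    refine ⟨φ ∘ₗ (e i).toLinearMap, (e i).symm.toLinearMap ∘ₗ ψ, ?_, ?_⟩
    · rw [Submodule.comap_comp, hφ]
    · rw [← hψ]
      ext x
      simp [A']
  obtain ⟨k⟩ := nonempty_pi_equiv_of_sameUniverse
    (fun i i' => (relInjective_of_small (hEinj i')).of_equiv (e i').symm)
    (fun i j => relInjective_of_small (hFinj j))
    (fun j i => (relInjective_of_small (hEinj i)).of_equiv (e i).symm)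
    (fun j j' => relInjective_of_small (hFinj j'))
    (fun i => by simpa using (hE i).comap (e i).toLinearMap) hF
    (fun i => (hA i).comap (e i).toLinearMap) hB hA' hB₀ σ τ hm' hu'
  exact ⟨(LinearEquiv.piCongrRight fun i => (d i).symm).trans k⟩

theorem meetIrreducible_bot {E : Type w} [AddCommGroup E] [Module R E]
    (hE : IsIndecomposableModule R E) (hinj : Module.Injective R E) :
    MeetIrreducible (⊥ : Submodule R E) :=
  meetIrreducible_bot_of_relInjective hE (relInjective_of_small hinj)

end Products

end WeakKrullSchmidt

/-- Let `f i : E i → E' i` and `g j : F j → F' j` be non-injective homomorphisms between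
indecomposable injective modules, with kernels `A i = ker (f i)` and `B j = ker (g j)`.
If there are bijections `σ, τ` matching the monogeny classes and the upper parts of the
kernels, then `∏ᵢ A i ≅ ∏ⱼ B j`. -/
theorem direct_products_of_kernels_isomorphic
    {R : Type*} [Ring R] {I J : Type*}
    (E E' : I → Type*) (F F' : J → Type*)
    [∀ i, AddCommGroup (E i)] [∀ i, Module R (E i)]
    [∀ i, AddCommGroup (E' i)] [∀ i, Module R (E' i)]
    [∀ j, AddCommGroup (F j)] [∀ j, Module R (F j)]
    [∀ j, AddCommGroup (F' j)] [∀ j, Module R (F' j)]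
    (hE : ∀ i, IsIndecomposableModule R (E i)) (hEinj : ∀ i, Module.Injective R (E i))
    (hE' : ∀ i, IsIndecomposableModule R (E' i)) (hE'inj : ∀ i, Module.Injective R (E' i))
    (hF : ∀ j, IsIndecomposableModule R (F j)) (hFinj : ∀ j, Module.Injective R (F j))
    (hF' : ∀ j, IsIndecomposableModule R (F' j)) (hF'inj : ∀ j, Module.Injective R (F' j))
    (f : ∀ i, E i →ₗ[R] E' i) (g : ∀ j, F j →ₗ[R] F' j)
    (hf : ∀ i, ¬Function.Injective (f i)) (hg : ∀ j, ¬Function.Injective (g j))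
    (σ τ : I ≃ J)
    (hm : ∀ i, SameMonogenyClass R (LinearMap.ker (f i)) (LinearMap.ker (g (σ i))))
    (hu : ∀ i, ∃ (φ : E i →ₗ[R] F (τ i)) (ψ : F (τ i) →ₗ[R] E i),
      Submodule.comap φ (LinearMap.ker (g (τ i))) = LinearMap.ker (f i) ∧
      Submodule.comap ψ (LinearMap.ker (f i)) = LinearMap.ker (g (τ i))) :
    Nonempty (((i : I) → LinearMap.ker (f i)) ≃ₗ[R] ((j : J) → LinearMap.ker (g j))) := by
  exact WeakKrullSchmidt.nonempty_pi_equiv hEinj hFinj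
    (fun i => WeakKrullSchmidt.meetIrreducible_bot (hE i) (hEinj i))
    (fun j => WeakKrullSchmidt.meetIrreducible_bot (hF j) (hFinj j))
    (fun i => (WeakKrullSchmidt.meetIrreducible_bot (hE' i) (hE'inj i)).comap (f i))
    (fun j => (WeakKrullSchmidt.meetIrreducible_bot (hF' j) (hF'inj j)).comap (g j))
    (fun i h => hf i (LinearMap.ker_eq_bot.1 h)) (fun j h => hg j (LinearMap.ker_eq_bot.1 h))
    σ τ hm hu
end
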